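/- arXiv:1207.4761 — 2 statements merged into one kernel-verified Lean document; each statement's English description precedes it below -/
import Mathlib

section
/- Let d > 1, K > 0 and n ≥ 1. Let ω ⊆ ℝ be an interval and g a real function such that for each 0 ≤ j < n, gʲ(ω) is an interval on which g is C², monotone, and satisfies |g'| ≥ d and |g''| ≤ K |g'|², and assume that the restriction of gⁿ to ω is a bijection onto (0,1]. Then for every θ* ∈ ω, exp(−dK/(d−1)) ≤ Leb(ω) · |(gⁿ)'(θ*)| ≤ exp(dK/(d−1)), where Leb denotes Lebesgue measure and (gⁿ)'(θ) = ∏_{j=0}^{n−1} g'(gʲ(θ)). -/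
open MeasureTheory Set

/-!
The Rényi condition says that `log |g'|` has derivative of size at most `K |g'|`, so by Cauchy's mean
value theorem `log |g'|` varies between two points of an interval by at most `K` times the
distance of their images under `g` (`abs_deriv_le_of_renyi`). Distances along two orbits grow at
least by the factor `d` at each step (`expanding_dist`), so the distances up to time `n` are
dominated by a geometric series ending in `|gⁿ x - gⁿ y| ≤ 1`. Summing the one-step bounds along
the orbit gives `|(gⁿ)'(x)| ≤ exp (dK/(d-1)) |(gⁿ)'(y)|` for all `x, y ∈ ω`
(`bounded_distortion`). Since `gⁿ` is injective on `ω` with image of length one, the change of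
variables formula gives `∫_ω |(gⁿ)'| = 1` (`setLIntegral_iterate_deriv`), and comparing the
integrand with its value at `θ*` yields both inequalities.
-/

lemma expanding_dist {d : ℝ} {s : Set ℝ} (hs : s.OrdConnected) {g g' : ℝ → ℝ}
    (hg : ∀ θ ∈ s, HasDerivAt g (g' θ) θ) (hexp : ∀ θ ∈ s, d ≤ |g' θ|)
    {x y : ℝ} (hx : x ∈ s) (hy : y ∈ s) : d * |x - y| ≤ |g x - g y| := by
  wlog hxy : x ≤ y generalizing x y
  · rw [abs_sub_comm x, abs_sub_comm (g x)]
    exact this hy hx (le_of_not_ge hxy)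
  rcases hxy.eq_or_lt with rfl | hlt
  · simp
  have hsub : Icc x y ⊆ s := hs.out hx hy
  obtain ⟨c, hc, h⟩ := exists_hasDerivAt_eq_slope g g' hlt
    (fun z hz => (hg z (hsub hz)).continuousAt.continuousWithinAt)
    (fun z hz => hg z (hsub (Ioo_subset_Icc_self hz)))
  have hpos : 0 < y - x := sub_pos.2 hlt
  rw [eq_div_iff hpos.ne'] at h
  rw [abs_sub_comm x, abs_sub_comm (g x), ← h, abs_mul]
  exact mul_le_mul_of_nonneg_right (hexp c (hsub (Ioo_subset_Icc_self hc))) (abs_nonneg _)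

/-- One-step distortion bound: the Rényi condition controls the variation of `log |g'|` by the
distance of the images. -/
lemma abs_deriv_le_of_renyi {K : ℝ} {s : Set ℝ} (hs : s.OrdConnected) {g g' g'' : ℝ → ℝ}
    (hg : ∀ θ ∈ s, HasDerivAt g (g' θ) θ) (hg' : ∀ θ ∈ s, HasDerivAt g' (g'' θ) θ)
    (hne : ∀ θ ∈ s, g' θ ≠ 0) (hren : ∀ θ ∈ s, |g'' θ| ≤ K * |g' θ| ^ 2)
    {x y : ℝ} (hx : x ∈ s) (hy : y ∈ s) :
    |g' x| ≤ Real.exp (K * |g x - g y|) * |g' y| := by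
  have key : |Real.log (g' x) - Real.log (g' y)| ≤ K * |g x - g y| := by
    wlog hxy : x ≤ y generalizing x y
    · rw [abs_sub_comm, abs_sub_comm (g x)]
      exact this hy hx (le_of_not_ge hxy)
    rcases hxy.eq_or_lt with rfl | hlt
    · simp
    have hsub : Icc x y ⊆ s := hs.out hx hy
    -- `Real.log` is `log |·|`, so no information on the sign of `g'` is needed.
    have hlog : ∀ z ∈ s, HasDerivAt (fun t => Real.log (g' t)) (g'' z / g' z) z :=
      fun z hz => (hg' z hz).log (hne z hz)
    obtain ⟨c, hc, h⟩ := exists_ratio_hasDerivAt_eq_ratio_slope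
      (fun t => Real.log (g' t)) (fun t => g'' t / g' t) hlt
      (fun z hz => (hlog z (hsub hz)).continuousAt.continuousWithinAt)
      (fun z hz => hlog z (hsub (Ioo_subset_Icc_self hz))) g g'
      (fun z hz => (hg z (hsub hz)).continuousAt.continuousWithinAt)
      (fun z hz => hg z (hsub (Ioo_subset_Icc_self hz)))
    have hcs := hsub (Ioo_subset_Icc_self hc)
    have hpos : 0 < |g' c| := abs_pos.2 (hne c hcs)
    have h2 : |g y - g x| * (|g'' c| / |g' c|)
        = |Real.log (g' y) - Real.log (g' x)| * |g' c| := by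
      rw [← abs_div, ← abs_mul, ← abs_mul, h]
    have h3 : |g'' c| / |g' c| ≤ K * |g' c| := by
      rw [div_le_iff₀ hpos]
      nlinarith [hren c hcs]
    rw [abs_sub_comm, abs_sub_comm (g x)]
    refine le_of_mul_le_mul_right ?_ hpos
    rw [← h2]
    nlinarith [mul_le_mul_of_nonneg_left h3 (abs_nonneg (g y - g x))]
  have hpx : 0 < |g' x| := abs_pos.2 (hne x hx)
  have hpy : 0 < |g' y| := abs_pos.2 (hne y hy)
  rw [← Real.exp_log hpx]
  rw [← Real.exp_log hpy]
  rw [← Real.exp_add, Real.exp_le_exp, Real.log_abs, Real.log_abs]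
  linarith [le_abs_self (Real.log (g' x) - Real.log (g' y))]

/-- Bounded distortion along an orbit of length `m`. The bound keeps the factor `|gᵐ x - gᵐ y|`
so that the induction closes: `1/(d-1) + 1 = d/(d-1)`. -/
lemma bounded_distortion {d K : ℝ} (hd : 1 < d) (hK : 0 < K) {n : ℕ} {ω : Set ℝ}
    {g g' g'' : ℝ → ℝ}
    (hinterval : ∀ j < n, (g^[j] '' ω).OrdConnected)
    (hderiv : ∀ j < n, ∀ θ ∈ g^[j] '' ω,
      HasDerivAt g (g' θ) θ ∧ HasDerivAt g' (g'' θ) θ)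
    (hexp : ∀ j < n, ∀ θ ∈ g^[j] '' ω, d ≤ |g' θ|)
    (hren : ∀ j < n, ∀ θ ∈ g^[j] '' ω, |g'' θ| ≤ K * |g' θ| ^ 2)
    {x y : ℝ} (hx : x ∈ ω) (hy : y ∈ ω) {m : ℕ} (hm : m ≤ n) :
    ∏ j ∈ Finset.range m, |g' (g^[j] x)| ≤
      Real.exp (d * K / (d - 1) * |g^[m] x - g^[m] y|) *
        ∏ j ∈ Finset.range m, |g' (g^[j] y)| := by
  induction m with
  | zero =>
    simp only [Finset.range_zero, Finset.prod_empty, mul_one]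
    have : 0 < d - 1 := by linarith
    exact Real.one_le_exp (by positivity)
  | succ m ih =>
    have hmn : m < n := hm
    have hxm : g^[m] x ∈ g^[m] '' ω := mem_image_of_mem _ hx
    have hym : g^[m] y ∈ g^[m] '' ω := mem_image_of_mem _ hy
    have h1 := expanding_dist (hinterval m hmn) (fun θ hθ => (hderiv m hmn θ hθ).1)
      (hexp m hmn) hxm hym
    have h2 := abs_deriv_le_of_renyi (hinterval m hmn) (fun θ hθ => (hderiv m hmn θ hθ).1)
      (fun θ hθ => (hderiv m hmn θ hθ).2)
      (fun θ hθ => abs_pos.1 (by linarith [hexp m hmn θ hθ])) (hren m hmn) hxm hym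
    rw [Finset.prod_range_succ, Finset.prod_range_succ, Function.iterate_succ_apply',
      Function.iterate_succ_apply']
    set a := |g^[m] x - g^[m] y|
    set b := |g (g^[m] x) - g (g^[m] y)|
    have hexpo : d * K / (d - 1) * a + K * b ≤ d * K / (d - 1) * b := by
      have hd1 : 0 < d - 1 := by linarith
      have e1 : d * K / (d - 1) * a = K / (d - 1) * (d * a) := by ring
      have e2 : d * K / (d - 1) * b = K / (d - 1) * b + K * b := by
        field_simp
        ring
      rw [e1, e2]
      gcongr
    calc _ ≤ (Real.exp (d * K / (d - 1) * a) * ∏ j ∈ Finset.range m, |g' (g^[j] y)|) *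
          (Real.exp (K * b) * |g' (g^[m] y)|) := by
            have := ih hmn.le
            gcongr
      _ = Real.exp (d * K / (d - 1) * a + K * b) *
          ((∏ j ∈ Finset.range m, |g' (g^[j] y)|) * |g' (g^[m] y)|) := by
            rw [Real.exp_add]
            ring
      _ ≤ _ := by gcongr

lemma hasDerivAt_iterate_prod {n : ℕ} {ω : Set ℝ} {g g' : ℝ → ℝ}
    (hderiv : ∀ j < n, ∀ θ ∈ g^[j] '' ω, HasDerivAt g (g' θ) θ)
    {x : ℝ} (hx : x ∈ ω) {m : ℕ} (hm : m ≤ n) :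
    HasDerivAt (g^[m]) (∏ j ∈ Finset.range m, g' (g^[j] x)) x := by
  induction m with
  | zero => simpa using hasDerivAt_id x
  | succ m ih =>
    rw [Finset.prod_range_succ, mul_comm, Function.iterate_succ']
    exact (hderiv m hm _ (mem_image_of_mem _ hx)).comp x (ih (Nat.le_of_succ_le hm))

/-- Change of variables under the injective map `gⁿ` from `ω` onto `(0,1]`. -/
lemma setLIntegral_iterate_deriv {n : ℕ} {ω : Set ℝ} (hω : ω.OrdConnected) {g g' : ℝ → ℝ}
    (hderiv : ∀ j < n, ∀ θ ∈ g^[j] '' ω, HasDerivAt g (g' θ) θ)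
    (hbij : Set.BijOn (g^[n]) ω (Set.Ioc 0 1)) :
    ∫⁻ x in ω, ENNReal.ofReal (∏ j ∈ Finset.range n, |g' (g^[j] x)|) = 1 := by
  have h := lintegral_image_eq_lintegral_abs_deriv_mul hω.measurableSet
    (fun x hx => (hasDerivAt_iterate_prod hderiv hx le_rfl).hasDerivWithinAt)
    hbij.injOn (fun _ => 1)
  rw [hbij.image_eq] at h
  simpa [Finset.abs_prod] using h.symm

/-- **Corollary (Gibbs property for Lebesgue).** If along the first `n` iterates of
the interval `ω` the map `g` is C², monotone, expanding (`|g'| ≥ d > 1`) and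
satisfies the Rényi condition `|g''| ≤ K |g'|²`, and `gⁿ` maps `ω` bijectively onto
`(0,1]`, then for every `θ* ∈ ω` the product `Leb(ω) · |(gⁿ)'(θ*)|` is within the
factor `exp(dK/(d−1))` of `1`. -/
theorem gibbs_property_cylinders
    (d K : ℝ) (hd : 1 < d) (hK : 0 < K) (n : ℕ) (hn : 1 ≤ n)
    (ω : Set ℝ) (hω : ω.OrdConnected)
    (g g' g'' : ℝ → ℝ)
    (hinterval : ∀ j < n, (g^[j] '' ω).OrdConnected)
    (hderiv : ∀ j < n, ∀ θ ∈ g^[j] '' ω,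
      HasDerivAt g (g' θ) θ ∧ HasDerivAt g' (g'' θ) θ)
    (hmono : ∀ j < n, MonotoneOn g (g^[j] '' ω) ∨ AntitoneOn g (g^[j] '' ω))
    (hexp : ∀ j < n, ∀ θ ∈ g^[j] '' ω, d ≤ |g' θ|)
    (hren : ∀ j < n, ∀ θ ∈ g^[j] '' ω, |g'' θ| ≤ K * |g' θ| ^ 2)
    (hbij : Set.BijOn (g^[n]) ω (Set.Ioc 0 1)) :
    ∀ θ ∈ ω,
      Real.exp (-(d * K / (d - 1))) ≤
          (volume ω).toReal * ∏ j ∈ Finset.range n, |g' (g^[j] θ)| ∧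
        (volume ω).toReal * ∏ j ∈ Finset.range n, |g' (g^[j] θ)| ≤
          Real.exp (d * K / (d - 1)) := by
  intro θ hθ
  set C := d * K / (d - 1) with hC
  have hd1 : 0 < d - 1 := by linarith
  have hC0 : 0 ≤ C := by positivity
  set P : ℝ → ℝ := fun x => ∏ j ∈ Finset.range n, |g' (g^[j] x)| with hP
  have hdist : ∀ x ∈ ω, ∀ y ∈ ω, P x ≤ Real.exp C * P y := by
    intro x hx y hy
    have hle : |g^[n] x - g^[n] y| ≤ 1 := by
      have h1 := hbij.mapsTo hx
      have h2 := hbij.mapsTo hy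
      rw [abs_le]
      constructor <;> linarith [h1.1, h1.2, h2.1, h2.2]
    refine (bounded_distortion hd hK hinterval hderiv hexp hren hx hy le_rfl).trans ?_
    have hCle : C * |g^[n] x - g^[n] y| ≤ C := mul_le_of_le_one_right hC0 hle
    exact mul_le_mul_of_nonneg_right (Real.exp_le_exp.2 hCle)
      (Finset.prod_nonneg fun _ _ => abs_nonneg _)
  have hPpos : 0 < P θ := Finset.prod_pos fun j hj => by
    have := hexp j (Finset.mem_range.1 hj) _ (mem_image_of_mem _ hθ)
    linarith
  have hint : ∫⁻ x in ω, ENNReal.ofReal (P x) = 1 :=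
    setLIntegral_iterate_deriv hω (fun j hj t ht => (hderiv j hj t ht).1) hbij
  have hlow : ENNReal.ofReal (Real.exp (-C) * P θ) * volume ω ≤ 1 := by
    rw [← hint, ← setLIntegral_const]
    refine setLIntegral_mono' hω.measurableSet fun x hx => ENNReal.ofReal_le_ofReal ?_
    rw [Real.exp_neg, inv_mul_le_iff₀ (Real.exp_pos C)]
    exact hdist θ hθ x hx
  have hupp : 1 ≤ ENNReal.ofReal (Real.exp C * P θ) * volume ω := by
    rw [← hint, ← setLIntegral_const]
    exact setLIntegral_mono' hω.measurableSet fun x hx =>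
      ENNReal.ofReal_le_ofReal (hdist x hx θ hθ)
  -- Finiteness of `volume ω` is what makes the passage through `toReal` faithful.
  have hfin : volume ω ≠ ⊤ := by
    intro htop
    rw [htop, ENNReal.mul_top (by simpa using by positivity)] at hlow
    simp at hlow
  rw [← ENNReal.ofReal_toReal hfin, ← ENNReal.ofReal_mul (by positivity)] at hlow hupp
  rw [ENNReal.ofReal_le_one] at hlow
  rw [ENNReal.one_le_ofReal] at hupp
  have hexpC := Real.exp_pos C
  constructor
  · rw [Real.exp_neg, inv_le_iff_one_le_mul₀ hexpC]
    linarith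
  · rw [Real.exp_neg, mul_assoc, inv_mul_le_iff₀ hexpC] at hlow
    linarith
end

section
/- Let g be a piecewise linear Markov expanding map with expansion constant d ≥ 16, let a₀ ∈ (0,2], let I₀ ⊆ [−2,2] be an invariant interval, and let 0 < α ≤ 1. Then there exists a constant C > 0, depending only on g, such that for every admissible curve Y, every j ≥ 1 and every interval I ⊆ ℝ with |I| ≤ α, Leb({θ ∈ (0,1] : π₂(φ_αʲ(θ, Y(θ))) ∈ I}) ≤ C √(|I|/α), where π₂ denotes projection to the second (fiber) coordinate and |I| the length of I. -/
/-! The fiber coordinate of the first iterate along an admissible curve is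
`F θ = a₀ + α sin (2πθ) - Y(θ)²`. As `|Y| ≤ 2` and `|Y'|, |Y''| ≤ α ≤ 1`, where
`|cos (2πθ)| ≥ √2/2` the derivative satisfies `|F'| ≥ (√2 π - 4) α ≥ 2α/5`, and where
`|sin (2πθ)| ≥ √2/2` the second derivative satisfies `|F''| ≥ (2√2 π² - 6) α ≥ α`.
The multiples of `1/8` cut `(0,1]` into five intervals on each of which one of the two bounds holds
with a constant sign. A van der Corput type sublevel estimate (`volume_le_of_deriv`,
`volume_le_of_second_deriv`) on each interval gives the case `j = 1` (`base_estimate`), with the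
universal constant `16`.

For larger `j`, the image under `φ_α` of an admissible curve restricted to a branch domain `ω i` is
again an admissible curve (`Admissible.push`), because the slope of `g` is at least `16` in absolute
value. The branch being affine and onto `(0,1]`, the preimage in `ω i` of a set of measure `v` has
measure `|ω i| v`; summing over the branches yields the estimate by induction with the same constant
(`iterate_estimate`).
-/

open MeasureTheory Filter Set

/-- The fiber maps `f_α(θ,x) = a₀ + α sin(2πθ) − x²`. -/
noncomputable def fA (a₀ α θ x : ℝ) : ℝ := a₀ + α * Real.sin (2 * Real.pi * θ) - x ^ 2

/-- The generalized Viana skew product `φ_α(θ,x) = (g(θ), f_α(θ,x))`. -/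
noncomputable def phiA (g : ℝ → ℝ) (a₀ α : ℝ) (p : ℝ × ℝ) : ℝ × ℝ :=
  (g p.1, fA a₀ α p.1 p.2)

/-- `g` is a piecewise linear Markov expanding map of `(0,1]` with expansion
constant `d`: an at most countable partition `{ω i}` of `(0,1]` into intervals,
on each of which `g` is affine with slope of absolute value at least `d` and maps
`ω i` bijectively onto `(0,1]`, and `log |g'|` is Lebesgue integrable. -/
def IsPLMarkov (g : ℝ → ℝ) (d : ℕ) : Prop :=
  Measurable g ∧
  ∃ (ω : ℕ → Set ℝ) (s b : ℕ → ℝ),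
    (∀ i, ω i ⊆ Set.Ioc 0 1) ∧
    (∀ i, (ω i).OrdConnected) ∧
    Pairwise (Function.onFun Disjoint ω) ∧
    (⋃ i, ω i) = Set.Ioc 0 1 ∧
    (∀ i, (ω i).Nonempty → (d : ℝ) ≤ |s i|) ∧
    (∀ i, ∀ θ ∈ ω i, g θ = s i * θ + b i) ∧
    (∀ i, (ω i).Nonempty → Set.BijOn g (ω i) (Set.Ioc 0 1)) ∧
    IntegrableOn (fun θ => Real.log |deriv g θ|) (Set.Ioc 0 1)

/-- The quadratic map `h(x) = a₀ − x²` is Misiurewicz: the critical point `0` is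
preperiodic to a repelling cycle. -/
def Misiurewicz (a₀ : ℝ) : Prop :=
  ∃ k p : ℕ, 1 ≤ k ∧ 1 ≤ p ∧
    (fun x => a₀ - x ^ 2)^[k + p] 0 = (fun x => a₀ - x ^ 2)^[k] 0 ∧
    1 < |deriv ((fun x => a₀ - x ^ 2)^[p]) ((fun x => a₀ - x ^ 2)^[k] 0)|

/-! ### Admissible curves -/

/-- `Y` is a curve in the fiber region `I₀`, twice differentiable on `(0,1]`, whose first two
derivatives are bounded by `α`. -/
def Admissible (α : ℝ) (I₀ : Set ℝ) (Y : ℝ → ℝ) : Prop :=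
  (∀ θ ∈ Ioc (0 : ℝ) 1, Y θ ∈ I₀) ∧ ∃ Y' Y'' : ℝ → ℝ,
    (∀ θ ∈ Ioc (0 : ℝ) 1, HasDerivWithinAt Y (Y' θ) (Ioc 0 1) θ) ∧
    (∀ θ ∈ Ioc (0 : ℝ) 1, HasDerivWithinAt Y' (Y'' θ) (Ioc 0 1) θ) ∧
    (∀ θ ∈ Ioc (0 : ℝ) 1, |Y' θ| ≤ α) ∧
    (∀ θ ∈ Ioc (0 : ℝ) 1, |Y'' θ| ≤ α)

/-! ### Sublevel estimates -/

lemma volume_le_of_abs_sub_le {S : Set ℝ} {D : ℝ}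
    (h : ∀ x ∈ S, ∀ y ∈ S, x ≤ y → y - x ≤ D) : volume S ≤ ENNReal.ofReal D := by
  refine (Real.volume_le_diam S).trans (Metric.ediam_le fun x hx y hy => ?_)
  rw [edist_dist, Real.dist_eq]
  apply ENNReal.ofReal_le_ofReal
  rcases le_total x y with hxy | hxy
  · rw [abs_sub_comm, abs_of_nonneg (by linarith)]; exact h x hx y hy hxy
  · rw [abs_of_nonneg (by linarith)]; exact h y hy x hx hxy

lemma abs_sub_le_of_volume_le {I : Set ℝ} (hI : I.OrdConnected) {L : ℝ} (hL : 0 ≤ L)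
    (h : volume I ≤ ENNReal.ofReal L) : ∀ x ∈ I, ∀ y ∈ I, |x - y| ≤ L := by
  have key : ∀ x ∈ I, ∀ y ∈ I, y - x ≤ L := by
    intro x hx y hy
    have h1 := (measure_mono (hI.out hx hy)).trans h
    rw [Real.volume_Icc] at h1
    exact (ENNReal.ofReal_le_ofReal_iff hL).1 h1
  intro x hx y hy
  exact abs_sub_le_iff.2 ⟨key y hy x hx, key x hx y hy⟩

lemma mul_sub_le_sub_of_le_deriv {F F' : ℝ → ℝ} {m x y : ℝ}
    (hF : ∀ θ ∈ Ioc (0 : ℝ) 1, HasDerivWithinAt F (F' θ) (Ioc 0 1) θ)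
    (hx : x ∈ Ioc (0 : ℝ) 1) (hy : y ∈ Ioc (0 : ℝ) 1) (hxy : x ≤ y)
    (hm : ∀ t ∈ Icc x y, m ≤ F' t) : m * (y - x) ≤ F y - F x := by
  rcases hxy.eq_or_lt with rfl | hlt
  · simp
  have hsub : Icc x y ⊆ Ioc (0 : ℝ) 1 := fun t ht => ⟨hx.1.trans_le ht.1, ht.2.trans hy.2⟩
  obtain ⟨c, hc, hcs⟩ := exists_hasDerivAt_eq_slope F F' hlt
    (fun t ht => ((hF t (hsub ht)).continuousWithinAt).mono hsub)
    (fun t ht => ((hF t (hsub (Ioo_subset_Icc_self ht))).mono hsub).hasDerivAt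
      (Icc_mem_nhds ht.1 ht.2))
  have h1 := hm c (Ioo_subset_Icc_self hc)
  rwa [hcs, le_div_iff₀ (by linarith)] at h1

/-- The oscillation of `F` on `S` bounds the diameter of `S` when `F' ≥ m` on its convex hull. -/
lemma volume_le_of_deriv {F F' : ℝ → ℝ} {m L : ℝ} {S : Set ℝ} (hm : 0 < m)
    (hF : ∀ θ ∈ Ioc (0 : ℝ) 1, HasDerivWithinAt F (F' θ) (Ioc 0 1) θ)
    (hS : S ⊆ Ioc 0 1)
    (hd : ∀ x ∈ S, ∀ y ∈ S, ∀ t ∈ Icc x y, m ≤ F' t)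
    (hosc : ∀ x ∈ S, ∀ y ∈ S, |F x - F y| ≤ L) :
    volume S ≤ ENNReal.ofReal (L / m) := by
  refine volume_le_of_abs_sub_le fun x hx y hy hxy => ?_
  rw [le_div_iff₀ hm, mul_comm]
  exact (mul_sub_le_sub_of_le_deriv hF (hS hx) (hS hy) hxy (hd x hx y hy)).trans
    ((le_abs_self _).trans (hosc y hy x hx))

lemma hasDerivWithinAt_neg_all {F F' : ℝ → ℝ} {s : Set ℝ}
    (hF : ∀ θ ∈ s, HasDerivWithinAt F (F' θ) s θ) :
    ∀ θ ∈ s, HasDerivWithinAt (fun t => -F t) (-F' θ) s θ :=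
  fun θ h => (hF θ h).fun_neg

lemma abs_neg_sub_neg_le {F : ℝ → ℝ} {S : Set ℝ} {L : ℝ}
    (h : ∀ x ∈ S, ∀ y ∈ S, |F x - F y| ≤ L) :
    ∀ x ∈ S, ∀ y ∈ S, |(-F x) - (-F y)| ≤ L := by
  intro x hx y hy
  rw [show -F x - -F y = F y - F x by ring]
  exact h y hy x hx

/-- Van der Corput type bound: when `F'' ≥ m`, the region `|F'| < m r` has length at most `2 r`,
and on each of the regions `F' ≥ m r` and `F' ≤ - m r` the first derivative bound applies. -/
lemma volume_le_of_second_deriv {F F' F'' : ℝ → ℝ} {m L r : ℝ} {S : Set ℝ} (hm : 0 < m)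
    (hr : 0 < r) (hL : 0 ≤ L)
    (hF : ∀ θ ∈ Ioc (0 : ℝ) 1, HasDerivWithinAt F (F' θ) (Ioc 0 1) θ)
    (hF' : ∀ θ ∈ Ioc (0 : ℝ) 1, HasDerivWithinAt F' (F'' θ) (Ioc 0 1) θ)
    (hS : S ⊆ Ioc 0 1)
    (hd : ∀ x ∈ S, ∀ y ∈ S, ∀ t ∈ Icc x y, m ≤ F'' t)
    (hosc : ∀ x ∈ S, ∀ y ∈ S, |F x - F y| ≤ L) :
    volume S ≤ ENNReal.ofReal (2 * r + 2 * (L / (m * r))) := by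
  have hmr : 0 < m * r := by positivity
  have hgrow : ∀ x ∈ S, ∀ y ∈ S, ∀ t ∈ Icc x y, ∀ u ∈ Icc t y, m * (u - t) ≤ F' u - F' t := by
    intro x hx y hy t ht u hu
    have h1 := hS hx
    have h2 := hS hy
    exact mul_sub_le_sub_of_le_deriv hF' ⟨h1.1.trans_le ht.1, ht.2.trans h2.2⟩
      ⟨h1.1.trans_le (ht.1.trans hu.1), hu.2.trans h2.2⟩ hu.1
      (fun v hv => hd x hx y hy v ⟨ht.1.trans hv.1, hv.2.trans hu.2⟩)
  have hcov : S ⊆ (S ∩ {θ | |F' θ| < m * r}) ∪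
      ((S ∩ {θ | m * r ≤ F' θ}) ∪ (S ∩ {θ | F' θ ≤ -(m * r)})) := by
    intro θ hθ
    rcases lt_or_ge |F' θ| (m * r) with h | h
    · exact Or.inl ⟨hθ, h⟩
    · rcases le_abs.1 h with h | h
      · exact Or.inr (Or.inl ⟨hθ, h⟩)
      · exact Or.inr (Or.inr ⟨hθ, show F' θ ≤ -(m * r) by linarith⟩)
  have hA : volume (S ∩ {θ | |F' θ| < m * r}) ≤ ENNReal.ofReal (2 * r) := by
    refine volume_le_of_abs_sub_le fun x hx y hy hxy => ?_
    have h1 := hgrow x hx.1 y hy.1 x ⟨le_rfl, hxy⟩ y ⟨hxy, le_rfl⟩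
    have h2 := abs_lt.1 (show |F' x| < m * r from hx.2)
    have h3 := abs_lt.1 (show |F' y| < m * r from hy.2)
    have h4 : m * (y - x) ≤ m * (2 * r) := by linarith
    exact le_of_mul_le_mul_left h4 hm
  have hB : volume (S ∩ {θ | m * r ≤ F' θ}) ≤ ENNReal.ofReal (L / (m * r)) := by
    refine volume_le_of_deriv hmr hF (inter_subset_left.trans hS) ?_
      (fun x hx y hy => hosc x hx.1 y hy.1)
    intro x hx y hy t ht
    have h1 := hgrow x hx.1 y hy.1 x ⟨le_rfl, ht.1.trans ht.2⟩ t ht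
    have h2 : m * r ≤ F' x := hx.2
    have h3 : 0 ≤ m * (t - x) := mul_nonneg hm.le (by linarith [ht.1])
    linarith
  have hC : volume (S ∩ {θ | F' θ ≤ -(m * r)}) ≤ ENNReal.ofReal (L / (m * r)) := by
    refine volume_le_of_deriv hmr (hasDerivWithinAt_neg_all hF) (inter_subset_left.trans hS) ?_
      (abs_neg_sub_neg_le fun x hx y hy => hosc x hx.1 y hy.1)
    intro x hx y hy t ht
    have h1 := hgrow x hx.1 y hy.1 t ht y ⟨ht.2, le_rfl⟩
    have h2 : F' y ≤ -(m * r) := hy.2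
    have h3 : 0 ≤ m * (y - t) := mul_nonneg hm.le (by linarith [ht.2])
    linarith
  calc volume S ≤ _ := measure_mono hcov
    _ ≤ _ := (measure_union_le _ _).trans (add_le_add hA
      ((measure_union_le _ _).trans (add_le_add hB hC)))
    _ = _ := by
      have : 0 ≤ L / (m * r) := by positivity
      rw [← ENNReal.ofReal_add this this, ← ENNReal.ofReal_add (by positivity) (by positivity)]
      ring_nf

/-! ### The first iterate -/

lemma cos_ge_of_abs_le {x : ℝ} (h : |x| ≤ Real.pi / 4) : 0.707 ≤ Real.cos x := by
  have h1 : Real.cos (Real.pi / 4) ≤ Real.cos |x| :=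
    Real.cos_le_cos_of_nonneg_of_le_pi (abs_nonneg x) (by linarith [Real.pi_pos]) h
  rw [Real.cos_abs, Real.cos_pi_div_four] at h1
  have h2 : (1.414 : ℝ) ≤ √2 := Real.le_sqrt_of_sq_le (by norm_num)
  linarith

lemma volume_pieces (S : Set ℝ) (hS : S ⊆ Ioc 0 1) :
    volume S ≤ volume (S ∩ Icc 0 (1/8)) + volume (S ∩ Icc (1/8) (3/8)) +
      volume (S ∩ Icc (3/8) (5/8)) + volume (S ∩ Icc (5/8) (7/8)) + volume (S ∩ Icc (7/8) 1) := by
  have hcov : S ⊆ (S ∩ Icc 0 (1/8)) ∪ (S ∩ Icc (1/8) (3/8)) ∪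
      (S ∩ Icc (3/8) (5/8)) ∪ (S ∩ Icc (5/8) (7/8)) ∪ (S ∩ Icc (7/8) 1) := by
    intro x hx
    have h := hS hx
    simp only [mem_union, mem_inter_iff, mem_Icc, hx, true_and]
    have h0 := h.1
    have h1 := h.2
    grind
  refine (measure_mono hcov).trans ?_
  refine (measure_union_le _ _).trans (add_le_add ?_ le_rfl)
  refine (measure_union_le _ _).trans (add_le_add ?_ le_rfl)
  refine (measure_union_le _ _).trans (add_le_add ?_ le_rfl)
  exact measure_union_le _ _

lemma hasDerivWithinAt_fA {a₀ α y' θ : ℝ} {Y : ℝ → ℝ} {s : Set ℝ}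
    (h : HasDerivWithinAt Y y' s θ) :
    HasDerivWithinAt (fun θ => fA a₀ α θ (Y θ))
      (α * (2 * Real.pi * Real.cos (2 * Real.pi * θ)) - 2 * Y θ * y') s θ := by
  have h1 : HasDerivWithinAt (fun θ : ℝ => 2 * Real.pi * θ) (2 * Real.pi * 1) s θ :=
    (hasDerivWithinAt_id θ s).const_mul _
  have h2 := ((h1.sin.const_mul α).const_add a₀).sub (h.fun_pow 2)
  unfold fA
  refine h2.congr_deriv ?_
  push_cast
  ring

lemma hasDerivWithinAt_fA_deriv {α y'' θ : ℝ} {Y Y' : ℝ → ℝ} {s : Set ℝ}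
    (h : HasDerivWithinAt Y (Y' θ) s θ) (h' : HasDerivWithinAt Y' y'' s θ) :
    HasDerivWithinAt
      (fun θ => α * (2 * Real.pi * Real.cos (2 * Real.pi * θ)) - 2 * Y θ * Y' θ)
      (-(α * (4 * Real.pi ^ 2 * Real.sin (2 * Real.pi * θ))) - 2 * Y' θ ^ 2 - 2 * Y θ * y'') s θ := by
  have h1 : HasDerivWithinAt (fun θ : ℝ => 2 * Real.pi * θ) (2 * Real.pi * 1) s θ :=
    (hasDerivWithinAt_id θ s).const_mul _
  have h2 := ((h1.cos.const_mul (2 * Real.pi)).const_mul α).sub ((h.const_mul 2).fun_mul h')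
  refine h2.congr_deriv ?_
  ring

/-- The case `j = 1` of the estimate, for any length `L` bounding that of `I`. -/
lemma base_estimate {a₀ α L : ℝ} {I₀ : Set ℝ} {Y : ℝ → ℝ} (hα : α ∈ Ioc (0 : ℝ) 1)
    (hI₀ : I₀ ⊆ Icc (-2 : ℝ) 2) (hY : Admissible α I₀ Y) (hL : 0 < L) (hLα : L ≤ α)
    {I : Set ℝ} (hI : I.OrdConnected) (hIL : volume I ≤ ENNReal.ofReal L) :
    volume {θ ∈ Ioc (0 : ℝ) 1 | fA a₀ α θ (Y θ) ∈ I} ≤ ENNReal.ofReal (16 * √(L / α)) := by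
  obtain ⟨hYI, Y', Y'', hd, hd', hb, hb'⟩ := hY
  obtain ⟨hα0, hα1⟩ := hα
  set S := {θ ∈ Ioc (0 : ℝ) 1 | fA a₀ α θ (Y θ) ∈ I} with hSdef
  have hS : S ⊆ Ioc 0 1 := fun θ h => h.1
  set F : ℝ → ℝ := fun θ => fA a₀ α θ (Y θ) with hFdef
  set F' : ℝ → ℝ := fun θ => α * (2 * Real.pi * Real.cos (2 * Real.pi * θ)) - 2 * Y θ * Y' θ
    with hF'def
  set F'' : ℝ → ℝ := fun θ => -(α * (4 * Real.pi ^ 2 * Real.sin (2 * Real.pi * θ)))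
    - 2 * Y' θ ^ 2 - 2 * Y θ * Y'' θ with hF''def
  have hF : ∀ θ ∈ Ioc (0 : ℝ) 1, HasDerivWithinAt F (F' θ) (Ioc 0 1) θ :=
    fun θ h => hasDerivWithinAt_fA (hd θ h)
  have hF' : ∀ θ ∈ Ioc (0 : ℝ) 1, HasDerivWithinAt F' (F'' θ) (Ioc 0 1) θ :=
    fun θ h => hasDerivWithinAt_fA_deriv (hd θ h) (hd' θ h)
  have hosc : ∀ x ∈ S, ∀ y ∈ S, |F x - F y| ≤ L :=
    fun x hx y hy => abs_sub_le_of_volume_le hI hL.le hIL _ hx.2 _ hy.2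
  have hY2 : ∀ θ ∈ Ioc (0 : ℝ) 1, |Y θ| ≤ 2 := fun θ h => abs_le.2 (hI₀ (hYI θ h))
  have e1 : ∀ θ ∈ Ioc (0 : ℝ) 1, |2 * Y θ * Y' θ| ≤ 4 * α := by
    intro θ h
    rw [abs_mul, abs_mul, abs_two]
    have := mul_le_mul (hY2 θ h) (hb θ h) (abs_nonneg _) (by norm_num)
    linarith
  have e2 : ∀ θ ∈ Ioc (0 : ℝ) 1, |2 * Y θ * Y'' θ| ≤ 4 * α := by
    intro θ h
    rw [abs_mul, abs_mul, abs_two]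
    have := mul_le_mul (hY2 θ h) (hb' θ h) (abs_nonneg _) (by norm_num)
    linarith
  have e3 : ∀ θ ∈ Ioc (0 : ℝ) 1, Y' θ ^ 2 ≤ α := by
    intro θ h
    have h1 := hb θ h
    rw [← sq_abs]
    nlinarith [abs_nonneg (Y' θ)]
  have hpi := Real.pi_gt_d2
  have pcos : ∀ c : ℝ, 0.707 ≤ c → 4.4 * α ≤ α * (2 * Real.pi * c) := by
    intro c hc
    have : 3.14 * 0.707 ≤ Real.pi * c := mul_le_mul hpi.le hc (by norm_num) (by linarith)
    nlinarith
  have psin : ∀ c : ℝ, 0.707 ≤ c → 7 * α ≤ α * (4 * Real.pi ^ 2 * c) := by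
    intro c hc
    have h1 : (3.14 : ℝ) ^ 2 ≤ Real.pi ^ 2 := by gcongr
    have : 3.14 ^ 2 * 0.707 ≤ Real.pi ^ 2 * c := mul_le_mul h1 hc (by norm_num) (by positivity)
    nlinarith
  have hsub : ∀ {u v x y t : ℝ}, x ∈ S ∩ Icc u v → y ∈ S ∩ Icc u v → t ∈ Icc x y →
      t ∈ Ioc (0 : ℝ) 1 ∧ u ≤ t ∧ t ≤ v := by
    intro u v x y t hx hy ht
    exact ⟨⟨(hS hx.1).1.trans_le ht.1, ht.2.trans (hS hy.1).2⟩, hx.2.1.trans ht.1,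
      ht.2.trans hy.2.2⟩
  set q := √(L / α) with hq
  have hLα0 : 0 < L / α := by positivity
  have hq0 : 0 < q := Real.sqrt_pos.2 hLα0
  have hqq : q * q = L / α := Real.mul_self_sqrt hLα0.le
  have hq1 : q ≤ 1 := Real.sqrt_le_one.2 ((div_le_one hα0).2 hLα)
  have hLq : L = α * (q * q) := by rw [hqq]; field_simp
  have b1 : L / (0.4 * α) ≤ 2.5 * q := by
    rw [div_le_iff₀ (by positivity), hLq]
    have : α * (q * q) ≤ α * (q * 1) := by gcongr
    linarith
  have b2 : 2 * q + 2 * (L / (α * q)) = 4 * q := by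
    rw [hLq]; field_simp; norm_num
  have m1 : volume (S ∩ Icc 0 (1/8)) ≤ ENNReal.ofReal (2.5 * q) := by
    refine (volume_le_of_deriv (m := 0.4 * α) (by positivity) hF (inter_subset_left.trans hS) ?_
      (fun x hx y hy => hosc x hx.1 y hy.1)).trans (ENNReal.ofReal_le_ofReal b1)
    intro x hx y hy t ht
    obtain ⟨h0, h1, h2⟩ := hsub hx hy ht
    have hc := pcos _ (cos_ge_of_abs_le (x := 2 * Real.pi * t) (abs_le.2 ⟨by nlinarith, by nlinarith⟩))
    have := (abs_le.1 (e1 t h0)).2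
    simp only [hF'def]; linarith
  have m5 : volume (S ∩ Icc (7/8) 1) ≤ ENNReal.ofReal (2.5 * q) := by
    refine (volume_le_of_deriv (m := 0.4 * α) (by positivity) hF (inter_subset_left.trans hS) ?_
      (fun x hx y hy => hosc x hx.1 y hy.1)).trans (ENNReal.ofReal_le_ofReal b1)
    intro x hx y hy t ht
    obtain ⟨h0, h1, h2⟩ := hsub hx hy ht
    have hc := pcos _ (cos_ge_of_abs_le (x := 2 * Real.pi * t - 2 * Real.pi)
      (abs_le.2 ⟨by nlinarith, by nlinarith⟩))
    rw [Real.cos_sub_two_pi] at hc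
    have := (abs_le.1 (e1 t h0)).2
    simp only [hF'def]; linarith
  have m3 : volume (S ∩ Icc (3/8) (5/8)) ≤ ENNReal.ofReal (2.5 * q) := by
    refine (volume_le_of_deriv (m := 0.4 * α) (by positivity) (hasDerivWithinAt_neg_all hF)
      (inter_subset_left.trans hS) ?_
      (abs_neg_sub_neg_le fun x hx y hy => hosc x hx.1 y hy.1)).trans
      (ENNReal.ofReal_le_ofReal b1)
    intro x hx y hy t ht
    obtain ⟨h0, h1, h2⟩ := hsub hx hy ht
    have hc := pcos _ (cos_ge_of_abs_le (x := 2 * Real.pi * t - Real.pi)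
      (abs_le.2 ⟨by nlinarith, by nlinarith⟩))
    rw [Real.cos_sub_pi] at hc
    have := (abs_le.1 (e1 t h0)).1
    simp only [hF'def]; linarith
  have m2 : volume (S ∩ Icc (1/8) (3/8)) ≤ ENNReal.ofReal (4 * q) := by
    rw [← b2]
    refine volume_le_of_second_deriv hα0 hq0 hL.le (hasDerivWithinAt_neg_all hF)
      (hasDerivWithinAt_neg_all hF') (inter_subset_left.trans hS) ?_
      (abs_neg_sub_neg_le fun x hx y hy => hosc x hx.1 y hy.1)
    intro x hx y hy t ht
    obtain ⟨h0, h1, h2⟩ := hsub hx hy ht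
    have hc := psin _ (cos_ge_of_abs_le (x := 2 * Real.pi * t - Real.pi / 2)
      (abs_le.2 ⟨by nlinarith, by nlinarith⟩))
    rw [Real.cos_sub_pi_div_two] at hc
    have := (abs_le.1 (e2 t h0)).1
    have := sq_nonneg (Y' t)
    simp only [hF''def]; linarith
  have m4 : volume (S ∩ Icc (5/8) (7/8)) ≤ ENNReal.ofReal (4 * q) := by
    rw [← b2]
    refine volume_le_of_second_deriv hα0 hq0 hL.le hF hF' (inter_subset_left.trans hS) ?_
      (fun x hx y hy => hosc x hx.1 y hy.1)
    intro x hx y hy t ht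
    obtain ⟨h0, h1, h2⟩ := hsub hx hy ht
    have hc := psin _ (cos_ge_of_abs_le (x := 2 * Real.pi * t - Real.pi - Real.pi / 2)
      (abs_le.2 ⟨by nlinarith, by nlinarith⟩))
    rw [Real.cos_sub_pi_div_two, Real.sin_sub_pi] at hc
    have := (abs_le.1 (e2 t h0)).2
    have := e3 t h0
    simp only [hF''def]; linarith
  calc volume S ≤ _ := volume_pieces S hS
    _ ≤ ENNReal.ofReal (2.5 * q) + ENNReal.ofReal (4 * q) + ENNReal.ofReal (2.5 * q)
        + ENNReal.ofReal (4 * q) + ENNReal.ofReal (2.5 * q) := by gcongr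
    _ = ENNReal.ofReal (15.5 * q) := by
      rw [← ENNReal.ofReal_add (by positivity) (by positivity),
        ← ENNReal.ofReal_add (by positivity) (by positivity),
        ← ENNReal.ofReal_add (by positivity) (by positivity),
        ← ENNReal.ofReal_add (by positivity) (by positivity)]
      ring_nf
    _ ≤ _ := ENNReal.ofReal_le_ofReal (by linarith)

/-! ### Propagation along the branches of `g` -/

/-- The image of an admissible curve under `φ_α` over a full affine branch `θ ↦ s θ + b`,
written as a graph over `(0,1]` via the inverse branch `τ ↦ (τ - b) / s`, is admissible. -/
lemma Admissible.push {a₀ α s b : ℝ} {I₀ : Set ℝ} {Y : ℝ → ℝ} (hα : α ∈ Ioc (0 : ℝ) 1)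
    (hI₀ : I₀ ⊆ Icc (-2 : ℝ) 2) (hinv : ∀ θ x : ℝ, x ∈ I₀ → fA a₀ α θ x ∈ I₀)
    (hY : Admissible α I₀ Y) (hs : 16 ≤ |s|)
    (hmaps : ∀ τ ∈ Ioc (0 : ℝ) 1, (τ - b) / s ∈ Ioc (0 : ℝ) 1) :
    Admissible α I₀ (fun τ => fA a₀ α ((τ - b) / s) (Y ((τ - b) / s))) := by
  obtain ⟨hYI, Y', Y'', hd, hd', hb, hb'⟩ := hY
  obtain ⟨hα0, hα1⟩ := hα
  have hs0 : 0 < |s| := by linarith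
  have hinner : ∀ τ, HasDerivWithinAt (fun τ : ℝ => (τ - b) / s) (1 / s) (Ioc 0 1) τ :=
    fun τ => ((hasDerivWithinAt_id τ _).sub_const b).div_const s
  have hpi := Real.pi_lt_d2
  have hpi0 := Real.pi_pos
  refine ⟨fun τ hτ => hinv _ _ (hYI _ (hmaps τ hτ)),
    fun τ => (α * (2 * Real.pi * Real.cos (2 * Real.pi * ((τ - b) / s)))
      - 2 * Y ((τ - b) / s) * Y' ((τ - b) / s)) * (1 / s),
    fun τ => (-(α * (4 * Real.pi ^ 2 * Real.sin (2 * Real.pi * ((τ - b) / s))))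
      - 2 * Y' ((τ - b) / s) ^ 2 - 2 * Y ((τ - b) / s) * Y'' ((τ - b) / s)) * (1 / s) * (1 / s),
    ?_, ?_, ?_, ?_⟩
  · intro τ hτ
    exact (hasDerivWithinAt_fA (hd _ (hmaps τ hτ))).comp τ (hinner τ) hmaps
  · intro τ hτ
    exact ((hasDerivWithinAt_fA_deriv (hd _ (hmaps τ hτ)) (hd' _ (hmaps τ hτ))).comp τ
      (hinner τ) hmaps).mul_const (1 / s)
  · intro τ hτ
    have hθ := hmaps τ hτ
    set θ := (τ - b) / s
    have h1 : |α * (2 * Real.pi * Real.cos (2 * Real.pi * θ))| ≤ α * (2 * Real.pi * 1) := by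
      rw [abs_mul, abs_mul, abs_of_pos hα0, abs_of_pos (by positivity : 0 < 2 * Real.pi)]
      gcongr
      exact Real.abs_cos_le_one _
    have h2 : |2 * Y θ * Y' θ| ≤ 2 * 2 * α := by
      rw [abs_mul, abs_mul, abs_two]
      gcongr
      · exact abs_le.2 (hI₀ (hYI θ hθ))
      · exact hb θ hθ
    have h3 := abs_sub (α * (2 * Real.pi * Real.cos (2 * Real.pi * θ))) (2 * Y θ * Y' θ)
    simp only []
    rw [abs_mul, abs_div, abs_one, mul_one_div, div_le_iff₀ hs0]
    nlinarith
  · intro τ hτ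
    have hθ := hmaps τ hτ
    set θ := (τ - b) / s
    have h1 : |α * (4 * Real.pi ^ 2 * Real.sin (2 * Real.pi * θ))|
        ≤ α * (4 * Real.pi ^ 2 * 1) := by
      rw [abs_mul, abs_mul, abs_of_pos hα0, abs_of_pos (by positivity : 0 < 4 * Real.pi ^ 2)]
      gcongr
      exact Real.abs_sin_le_one _
    have h2 : |2 * Y θ * Y'' θ| ≤ 2 * 2 * α := by
      rw [abs_mul, abs_mul, abs_two]
      gcongr
      · exact abs_le.2 (hI₀ (hYI θ hθ))
      · exact hb' θ hθ
    have h3 : Y' θ ^ 2 ≤ α := by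
      have h1 := hb θ hθ
      rw [← sq_abs]
      nlinarith [abs_nonneg (Y' θ)]
    have h5 : Real.pi ^ 2 ≤ 3.15 ^ 2 := by gcongr
    have h6 : α * (4 * Real.pi ^ 2 * 1) ≤ α * 40 := by gcongr; linarith
    have h7 : |-(α * (4 * Real.pi ^ 2 * Real.sin (2 * Real.pi * θ))) - 2 * Y' θ ^ 2
        - 2 * Y θ * Y'' θ| ≤ 46 * α := by
      have := abs_le.1 h1
      have := abs_le.1 h2
      have := sq_nonneg (Y' θ)
      exact abs_le.2 ⟨by linarith, by linarith⟩
    simp only []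
    rw [abs_mul, abs_mul, abs_div, abs_one, mul_one_div, mul_one_div, div_div,
      div_le_iff₀ (by positivity)]
    have h8 : (16 : ℝ) * 16 ≤ |s| * |s| := by gcongr
    nlinarith

lemma volume_affine_preimage {s b : ℝ} (hs : s ≠ 0) (A : Set ℝ) :
    volume ((fun θ => s * θ + b) ⁻¹' A) = ENNReal.ofReal |s⁻¹| * volume A := by
  have : (fun θ => s * θ + b) ⁻¹' A = (fun θ => s * θ) ⁻¹' ((fun x => x + b) ⁻¹' A) := rfl
  rw [this, Real.volume_preimage_mul_left hs, measure_preimage_add_right]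

/-- Any bound for the first iterate that is uniform over admissible curves propagates to all
iterates with the same constant. -/
lemma iterate_estimate {d : ℕ} (hd : 16 ≤ d) {g : ℝ → ℝ} (hg : IsPLMarkov g d)
    {a₀ α : ℝ} (hα : α ∈ Ioc (0 : ℝ) 1) {I₀ : Set ℝ} (hI₀ : I₀ ⊆ Icc (-2 : ℝ) 2)
    (hinv : ∀ θ x : ℝ, x ∈ I₀ → fA a₀ α θ x ∈ I₀) {I : Set ℝ} {B : ENNReal}
    (hbase : ∀ Y, Admissible α I₀ Y →
      volume {θ ∈ Ioc (0 : ℝ) 1 | fA a₀ α θ (Y θ) ∈ I} ≤ B) (j : ℕ) :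
    ∀ Y, Admissible α I₀ Y →
      volume {θ ∈ Ioc (0 : ℝ) 1 | ((phiA g a₀ α)^[j + 1] (θ, Y θ)).2 ∈ I} ≤ B := by
  obtain ⟨-, ω, s, b, hsub, hoc, hdisj, hunion, hslope, haff, hbij, -⟩ := hg
  induction j with
  | zero => simpa [phiA] using hbase
  | succ j ih =>
    intro Y hY
    have hs16 : ∀ i, (ω i).Nonempty → 16 ≤ |s i| := fun i hi =>
      le_trans (by exact_mod_cast hd) (hslope i hi)
    have hsne : ∀ i, (ω i).Nonempty → s i ≠ 0 := fun i hi h0 => by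
      have := hs16 i hi
      rw [h0, abs_zero] at this
      linarith
    -- the inverse branch takes values in `ω i`
    have hinvb : ∀ i, (ω i).Nonempty → ∀ τ ∈ Ioc (0 : ℝ) 1, (τ - b i) / s i ∈ ω i := by
      intro i hi τ hτ
      obtain ⟨θ, hθ, rfl⟩ := (hbij i hi).surjOn hτ
      rw [haff i θ hθ, add_sub_cancel_right, mul_div_cancel_left₀ _ (hsne i hi)]
      exact hθ
    have hω : ∀ i, (ω i).Nonempty →
        ω i = (fun θ => s i * θ + b i) ⁻¹' Ioc 0 1 := by
      intro i hi
      ext θ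
      constructor
      · intro hθ
        rw [mem_preimage, ← haff i θ hθ]
        exact (hbij i hi).mapsTo hθ
      · intro hθ
        have h1 := hinvb i hi _ hθ
        simpa [mul_div_cancel_left₀ _ (hsne i hi)] using h1
    have hωvol : ∀ i, (ω i).Nonempty → volume (ω i) = ENNReal.ofReal |(s i)⁻¹| := by
      intro i hi
      rw [hω i hi, volume_affine_preimage (hsne i hi)]
      simp
    set T := {θ ∈ Ioc (0 : ℝ) 1 | ((phiA g a₀ α)^[j + 1 + 1] (θ, Y θ)).2 ∈ I} with hT
    have hpiece : ∀ i, volume (T ∩ ω i) ≤ volume (ω i) * B := by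
      intro i
      rcases (ω i).eq_empty_or_nonempty with he | hi
      · simp [he]
      have hadm := hY.push (b := b i) hα hI₀ hinv (hs16 i hi)
        (fun τ hτ => hsub i (hinvb i hi τ hτ))
      rw [hωvol i hi]
      refine (measure_mono ?_).trans
        ((volume_affine_preimage (b := b i) (hsne i hi) _).le.trans
          (mul_le_mul_right (ih _ hadm) _))
      rintro θ ⟨hθT, hθ⟩
      have hgθ := haff i θ hθ
      have hτ := (hbij i hi).mapsTo hθ
      rw [hgθ] at hτ
      refine ⟨hτ, ?_⟩
      have h2 := hθT.2
      rw [Function.iterate_succ_apply] at h2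
      have h3 : (s i * θ + b i - b i) / s i = θ := by
        rw [add_sub_cancel_right, mul_div_cancel_left₀ _ (hsne i hi)]
      simp only [h3]
      rw [← hgθ]
      exact h2
    calc volume T ≤ volume (⋃ i, T ∩ ω i) := measure_mono (by
            rw [← inter_iUnion, hunion]
            exact fun θ h => ⟨h, h.1⟩)
      _ ≤ ∑' i, volume (T ∩ ω i) := measure_iUnion_le _
      _ ≤ ∑' i, volume (ω i) * B := ENNReal.tsum_le_tsum hpiece
      _ = (∑' i, volume (ω i)) * B := ENNReal.tsum_mul_right
      _ = B := by
        rw [← measure_iUnion hdisj (fun i => (hoc i).measurableSet), hunion]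
        simp

/-- **Corollary (iterated measure estimate).** There is a constant `C > 0`
depending only on `g` such that for every admissible curve `Y`, every `j ≥ 1` and
every interval `I` with `|I| ≤ α`, the set of `θ ∈ (0,1]` whose `j`-th image on the
curve has fiber coordinate in `I` has Lebesgue measure at most `C √(|I|/α)`. -/
theorem iterated_curve_measure_estimate
    (d : ℕ) (hd : 16 ≤ d) (g : ℝ → ℝ) (hg : IsPLMarkov g d) :
    ∃ C > (0 : ℝ), ∀ a₀ ∈ Set.Ioc (0 : ℝ) 2, ∀ α ∈ Set.Ioc (0 : ℝ) 1,
      ∀ I₀ : Set ℝ, I₀ ⊆ Set.Icc (-2 : ℝ) 2 →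
        (∀ θ x : ℝ, x ∈ I₀ → fA a₀ α θ x ∈ I₀) →
        ∀ Y Y' Y'' : ℝ → ℝ,
          (∀ θ ∈ Set.Ioc (0 : ℝ) 1, Y θ ∈ I₀) →
          (∀ θ ∈ Set.Ioc (0 : ℝ) 1, HasDerivWithinAt Y (Y' θ) (Set.Ioc 0 1) θ) →
          (∀ θ ∈ Set.Ioc (0 : ℝ) 1, HasDerivWithinAt Y' (Y'' θ) (Set.Ioc 0 1) θ) →
          (∀ θ ∈ Set.Ioc (0 : ℝ) 1, |Y' θ| ≤ α) →
          (∀ θ ∈ Set.Ioc (0 : ℝ) 1, |Y'' θ| ≤ α) →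
          ∀ j : ℕ, 1 ≤ j → ∀ I : Set ℝ, I.OrdConnected →
            volume I ≤ ENNReal.ofReal α →
            volume {θ ∈ Set.Ioc (0 : ℝ) 1 | ((phiA g a₀ α)^[j] (θ, Y θ)).2 ∈ I} ≤
              ENNReal.ofReal (C * Real.sqrt ((volume I).toReal / α)) := by
  refine ⟨16, by norm_num, ?_⟩
  intro a₀ _ α hα I₀ hI₀ hinv Y Y' Y'' hYI hd1 hd2 hb1 hb2 j hj I hI hIα
  have hY : Admissible α I₀ Y := ⟨hYI, Y', Y'', hd1, hd2, hb1, hb2⟩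
  obtain ⟨k, rfl⟩ : ∃ k, j = k + 1 := ⟨j - 1, by omega⟩
  have hfin : volume I ≠ ⊤ := (hIα.trans_lt ENNReal.ofReal_lt_top).ne
  have main : ∀ L : ℝ, 0 < L → L ≤ α → volume I ≤ ENNReal.ofReal L →
      volume {θ ∈ Set.Ioc (0 : ℝ) 1 | ((phiA g a₀ α)^[k + 1] (θ, Y θ)).2 ∈ I} ≤
        ENNReal.ofReal (16 * √(L / α)) := fun L hL hLα hIL =>
    iterate_estimate hd hg hα hI₀ hinv
      (fun Z hZ => base_estimate hα hI₀ hZ hL hLα hI hIL) k Y hY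
  rcases (ENNReal.toReal_nonneg (a := volume I)).eq_or_lt with h0 | h0
  -- when `I` is null, let `L` tend to `0` from the right
  · have hI0 : volume I = 0 := by
      rcases (ENNReal.toReal_eq_zero_iff _).1 h0.symm with h | h
      · exact h
      · exact absurd h hfin
    rw [← h0]
    have hc : Continuous fun L : ℝ => ENNReal.ofReal (16 * √(L / α)) :=
      ENNReal.continuous_ofReal.comp (by fun_prop)
    refine ge_of_tendsto (hc.continuousWithinAt (s := Ioi 0) (x := 0)) ?_
    filter_upwards [Ioc_mem_nhdsGT hα.1] with L hL
    exact main L hL.1 hL.2 (by simp [hI0])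
  · exact main _ h0 (ENNReal.toReal_le_of_le_ofReal hα.1.le hIα)
      (ENNReal.ofReal_toReal hfin).ge
end
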